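/- Impossibility for B = K = 2: in the cyclic hierarchical secure aggregation model with K = B = 2, per-link decompositions, per-link recoverability, relay security at both relays, and server security, it cannot hold that both H(Z_1) ≤ L/2 and H(Z_2) ≤ L/2. Consequently, for B = K = 2 the rate tuple (R_X, R_Y, R_Z, R_{Z_Σ}) = (1, 1, 1/2, 1) is not achievable. -/

import Mathlib

/-!
Write `h` for entropy, and suppose `h(Z_k) ≤ L/2` for both users.

* Recovery and independence of inputs and keys force the two shares `W_{k,0}, W_{k,1}` to determine
  `W_k`, so `h(W_{k,0}) + h(W_{k,1}) ≥ L`.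
* Relay security together with per-link recoverability is a one-time-pad bound:
  `h(W_{k,i}) ≤ h(Z_k) ≤ L/2`. Hence each share has entropy at least `L/2`. In the same way
  `L/2 ≤ h(W_{k,i}) ≤ h(X_{k,i}) ≤ h(Z_k) ≤ L/2`.
* A relay sees both messages `X_{0,i}, X_{1,i}`, of joint entropy at least `L` given the keys' values,
  and independent of the inputs; this needs `h(Z_0, Z_1) ≥ L`. So the two keys are independent,
  and the pairs `(W_0, Z_0)` and `(W_1, Z_1)` are independent.
* Then the messages of user 0, of joint entropy at most `L`, together with `(W_1, Z_1)` determine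
  `W_0`, although they carry only `L - h(X_{0,0}, X_{0,1} | W_0) ≤ L/2` units about `W_0`.

Functional dependence is handled pointwise on the support of `p` (`Determines`), which turns every
rearrangement of tuples into a first-order triviality; the information-theoretic content is in
`ent_mono`, `ent_submod` and `determines_of_condEnt`, the last being the equality case of
`ent_mono`. Independence is used only as the inequality `h(X) + h(Y) ≤ h(X, Y)`
(`AddEnt`), which passes to functions of `X` and `Y`.
-/

open scoped BigOperators

noncomputable def pr {Ω : Type} [Fintype Ω] {α : Type} [DecidableEq α]
    (p : Ω → ℝ) (X : Ω → α) (a : α) : ℝ :=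
  ∑ ω, if X ω = a then p ω else 0

noncomputable def ent {Ω : Type} [Fintype Ω] {α : Type} [Fintype α] [DecidableEq α]
    (q : ℕ) (p : Ω → ℝ) (X : Ω → α) : ℝ :=
  -∑ a, pr p X a * Real.logb q (pr p X a)

noncomputable def condEnt {Ω : Type} [Fintype Ω] {α β : Type}
    [Fintype α] [DecidableEq α] [Fintype β] [DecidableEq β]
    (q : ℕ) (p : Ω → ℝ) (X : Ω → α) (Y : Ω → β) : ℝ :=
  ent q p (fun ω => (X ω, Y ω)) - ent q p Y

noncomputable def mutInfo {Ω : Type} [Fintype Ω] {α β : Type}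
    [Fintype α] [DecidableEq α] [Fintype β] [DecidableEq β]
    (q : ℕ) (p : Ω → ℝ) (X : Ω → α) (Y : Ω → β) : ℝ :=
  ent q p X + ent q p Y - ent q p (fun ω => (X ω, Y ω))

noncomputable def condMutInfo {Ω : Type} [Fintype Ω] {α β γ : Type}
    [Fintype α] [DecidableEq α] [Fintype β] [DecidableEq β] [Fintype γ] [DecidableEq γ]
    (q : ℕ) (p : Ω → ℝ) (X : Ω → α) (Y : Ω → β) (Z : Ω → γ) : ℝ :=
  condEnt q p X Z + condEnt q p Y Z - condEnt q p (fun ω => (X ω, Y ω)) Z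

def IsPMF {Ω : Type} [Fintype Ω] (p : Ω → ℝ) : Prop :=
  (∀ ω, 0 ≤ p ω) ∧ ∑ ω, p ω = 1

def IndepRV {Ω : Type} [Fintype Ω] {α β : Type} [DecidableEq α] [DecidableEq β]
    (p : Ω → ℝ) (X : Ω → α) (Y : Ω → β) : Prop :=
  ∀ a b, pr p (fun ω => (X ω, Y ω)) (a, b) = pr p X a * pr p Y b

/-- The set of `B` relays `{k, k+1, …, k+B−1}` (indices mod `K`) associated with user `k`. -/
def Bset (K B : ℕ) (k : Fin K) : Finset (Fin K) :=
  (Finset.range B).image fun j => ⟨((k : ℕ) + j) % K, Nat.mod_lt _ k.pos⟩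

/-- The set of users associated with relay `i`. -/
def Uset (K B : ℕ) (i : Fin K) : Finset (Fin K) :=
  Finset.univ.filter fun k => i ∈ Bset K B k

/-! ### Shannon entropy on a finite probability space -/

/-- On the support of `p`, the value of `Y` determines the value of `X`. -/
def Determines {Ω α β : Type} (p : Ω → ℝ) (Y : Ω → β) (X : Ω → α) : Prop :=
  ∀ ω ω', p ω ≠ 0 → p ω' ≠ 0 → Y ω = Y ω' → X ω = X ω'

/-- Independence of `X` and `Y`, expressed as `h(X) + h(Y) ≤ h(X, Y)`. -/
def AddEnt {Ω : Type} [Fintype Ω] {α β : Type} [Fintype α] [DecidableEq α]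
    [Fintype β] [DecidableEq β] (q : ℕ) (p : Ω → ℝ) (X : Ω → α) (Y : Ω → β) : Prop :=
  ent q p X + ent q p Y ≤ ent q p (fun ω => (X ω, Y ω))

set_option linter.unusedSectionVars false

section Entropy

variable {Ω : Type} [Fintype Ω] {p : Ω → ℝ} {q : ℕ}
  {α β γ α' β' : Type} [Fintype α] [DecidableEq α] [Fintype β] [DecidableEq β]
  [Fintype γ] [DecidableEq γ] [Fintype α'] [DecidableEq α'] [Fintype β'] [DecidableEq β']

lemma sum_pr_mul (X : Ω → α) (g : α → ℝ) : ∑ a, pr p X a * g a = ∑ ω, p ω * g (X ω) := by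
  simp only [pr, Finset.sum_mul]
  rw [Finset.sum_comm]
  refine Finset.sum_congr rfl fun ω _ => ?_
  simp [ite_mul]

/-- Entropy as an expectation over `Ω`, which allows variables with different ranges to be compared
point by point. -/
lemma ent_eq (X : Ω → α) :
    ent q p X = -∑ ω, p ω * Real.logb q (pr p X (X ω)) := by
  rw [ent, sum_pr_mul X (fun a => Real.logb q (pr p X a))]

lemma pr_nonneg (hp : IsPMF p) (X : Ω → α) (a : α) : 0 ≤ pr p X a :=
  Finset.sum_nonneg fun ω _ => by split_ifs <;> simp [hp.1 ω]

lemma pr_pos (hp : IsPMF p) (X : Ω → α) {ω : Ω} (h : p ω ≠ 0) : 0 < pr p X (X ω) := by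
  have h1 : (if X ω = X ω then p ω else 0) ≤ pr p X (X ω) :=
    Finset.single_le_sum (f := fun ω' => if X ω' = X ω then p ω' else 0)
      (fun ω' _ => by split_ifs <;> simp [hp.1 ω']) (Finset.mem_univ ω)
  have h2 : 0 < p ω := lt_of_le_of_ne (hp.1 ω) (Ne.symm h)
  simp only [if_true] at h1
  linarith

lemma sum_pr (hp : IsPMF p) (X : Ω → α) : ∑ a, pr p X a = 1 := by
  have := sum_pr_mul (p := p) X (fun _ => 1)
  simpa [hp.2] using this

lemma sum_pr_pair (X : Ω → α) (Z : Ω → γ) (c : γ) :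
    ∑ a, pr p (fun ω => (X ω, Z ω)) (a, c) = pr p Z c := by
  simp only [pr]
  rw [Finset.sum_comm]
  refine Finset.sum_congr rfl fun ω _ => ?_
  by_cases h : Z ω = c <;> simp [h]

lemma pr_le_of_determines (hp : IsPMF p) {X : Ω → α} {Y : Ω → β} (h : Determines p Y X)
    {ω : Ω} (hω : p ω ≠ 0) : pr p Y (Y ω) ≤ pr p X (X ω) := by
  refine Finset.sum_le_sum fun ω' _ => ?_
  by_cases h0 : p ω' = 0
  · simp [h0]
  · by_cases h1 : Y ω' = Y ω
    · simp [h1, h ω' ω h0 hω h1]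
    · simp only [h1, if_false]
      split_ifs <;> simp [hp.1 ω']

lemma ent_mono (hq : 1 < (q : ℝ)) (hp : IsPMF p) {X : Ω → α} {Y : Ω → β}
    (h : Determines p Y X) : ent q p X ≤ ent q p Y := by
  rw [ent_eq, ent_eq, neg_le_neg_iff]
  refine Finset.sum_le_sum fun ω _ => ?_
  by_cases h0 : p ω = 0
  · simp [h0]
  · exact mul_le_mul_of_nonneg_left
      (Real.logb_le_logb_of_le hq (pr_pos hp Y h0) (pr_le_of_determines hp h h0)) (hp.1 ω)

/-- If `H(X | Y) = 0`, then every support point has `pr Y = pr (X, Y)`, so no other value of `X`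
is compatible with that value of `Y`. -/
lemma determines_of_condEnt (hq : 1 < (q : ℝ)) (hp : IsPMF p) {X : Ω → α} {Y : Ω → β}
    (h : condEnt q p X Y = 0) : Determines p Y X := by
  have hd : Determines p (fun ω => (X ω, Y ω)) Y := fun ω ω' _ _ e => (Prod.mk.inj e).2
  rw [condEnt, ent_eq, ent_eq, neg_sub_neg, ← Finset.sum_sub_distrib] at h
  have hnn : ∀ ω ∈ Finset.univ, 0 ≤ p ω * Real.logb q (pr p Y (Y ω)) -
      p ω * Real.logb q (pr p (fun ω => (X ω, Y ω)) (X ω, Y ω)) := by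
    intro ω _
    by_cases h0 : p ω = 0
    · simp [h0]
    · rw [← mul_sub]
      refine mul_nonneg (hp.1 ω) (sub_nonneg.2 ?_)
      exact Real.logb_le_logb_of_le hq (pr_pos hp (fun ω => (X ω, Y ω)) h0)
        (pr_le_of_determines hp hd h0)
  rw [Finset.sum_eq_zero_iff_of_nonneg hnn] at h
  intro ω ω' h0 h0' e
  have h1 := h ω (Finset.mem_univ _)
  rw [← mul_sub, mul_eq_zero, sub_eq_zero] at h1
  have h2 := Real.logb_injOn_pos hq (Set.mem_Ioi.2 (pr_pos hp Y h0))
    (Set.mem_Ioi.2 (pr_pos hp (fun ω => (X ω, Y ω)) h0)) (h1.resolve_left h0)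
  by_contra hne
  have h3 : pr p (fun ω => (X ω, Y ω)) (X ω, Y ω) < pr p Y (Y ω) := by
    refine Finset.sum_lt_sum (fun ω'' _ => ?_) ⟨ω', Finset.mem_univ _, ?_⟩
    · by_cases ha : Y ω'' = Y ω
      · by_cases hb : X ω'' = X ω <;> simp [ha, hb, hp.1 ω'']
      · simp [ha]
    · simpa [e, Ne.symm hne] using lt_of_le_of_ne (hp.1 ω') (Ne.symm h0')
  linarith

/-- Gibbs' inequality: coding `X` with a subprobability `r` costs at least the entropy. -/
lemma ent_le_cross (hq : 1 < (q : ℝ)) (hp : IsPMF p) (X : Ω → α) (r : α → ℝ)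
    (hr : ∀ a, 0 ≤ r a) (hr' : ∀ ω, p ω ≠ 0 → 0 < r (X ω)) (hs : ∑ a, r a ≤ 1) :
    ent q p X ≤ -∑ ω, p ω * Real.logb q (r (X ω)) := by
  have hlog : 0 < Real.log q := Real.log_pos hq
  rw [ent_eq, neg_le_neg_iff, ← sub_nonneg, ← Finset.sum_sub_distrib]
  have key : ∀ ω, (p ω - p ω * (r (X ω) / pr p X (X ω))) / Real.log q ≤
      p ω * Real.logb q (pr p X (X ω)) - p ω * Real.logb q (r (X ω)) := by
    intro ω
    by_cases h0 : p ω = 0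
    · simp [h0]
    · have ha := pr_pos hp X h0
      have hb := hr' ω h0
      have h1 := Real.log_le_sub_one_of_pos (div_pos hb ha)
      rw [Real.log_div hb.ne' ha.ne'] at h1
      simp only [Real.logb]
      rw [← mul_sub, ← sub_div, ← mul_div_assoc (p ω) (Real.log _ - _), ← mul_one_sub]
      exact div_le_div_of_nonneg_right
        (mul_le_mul_of_nonneg_left (by linarith) (hp.1 ω)) hlog.le
  refine le_trans ?_ (Finset.sum_le_sum fun ω _ => key ω)
  rw [← Finset.sum_div, Finset.sum_sub_distrib, hp.2,
    ← sum_pr_mul X (fun a => r a / pr p X a)]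
  refine div_nonneg (sub_nonneg.2 (le_trans (Finset.sum_le_sum fun a _ => ?_) hs)) hlog.le
  by_cases h : pr p X a = 0
  · simp [h, hr a]
  · rw [mul_div_cancel₀ _ h]

/-- Gibbs' inequality against the uniform law on a type with `q ^ n` elements. -/
lemma ent_le_card (hq : 1 < (q : ℝ)) (hp : IsPMF p) (X : Ω → α) (n : ℕ)
    (hn : Fintype.card α = q ^ n) : ent q p X ≤ n := by
  have hN : (0 : ℝ) < (q : ℝ) ^ n := pow_pos (by linarith) n
  have h := ent_le_cross hq hp X (fun _ => ((q : ℝ) ^ n)⁻¹) (fun _ => by positivity)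
    (fun _ _ => by positivity)
    (by simp only [Finset.sum_const, Finset.card_univ, hn, nsmul_eq_mul]; push_cast
        rw [mul_inv_cancel₀ hN.ne'])
  rw [← Finset.sum_mul, hp.2, Real.logb_inv, Real.logb_pow,
    Real.logb_self_eq_one hq] at h
  linarith

lemma ent_submod (hq : 1 < (q : ℝ)) (hp : IsPMF p) (X : Ω → α) (Y : Ω → β) (Z : Ω → γ) :
    ent q p (fun ω => (X ω, Y ω, Z ω)) + ent q p Z ≤
      ent q p (fun ω => (X ω, Z ω)) + ent q p (fun ω => (Y ω, Z ω)) := by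
  -- Gibbs' inequality against the law making `X` and `Y` conditionally independent given `Z`.
  have h := ent_le_cross hq hp (fun ω => (X ω, Y ω, Z ω))
    (fun t => pr p (fun ω => (X ω, Z ω)) (t.1, t.2.2) *
      pr p (fun ω => (Y ω, Z ω)) (t.2.1, t.2.2) / pr p Z t.2.2)
    (fun t => div_nonneg (mul_nonneg (pr_nonneg hp _ _) (pr_nonneg hp _ _)) (pr_nonneg hp _ _))
    (fun ω h0 => div_pos (mul_pos (pr_pos hp (fun ω => (X ω, Z ω)) h0)
      (pr_pos hp (fun ω => (Y ω, Z ω)) h0)) (pr_pos hp Z h0))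
    (by
      rw [Fintype.sum_prod_type, Finset.sum_comm, Fintype.sum_prod_type, Finset.sum_comm]
      refine (Finset.sum_le_sum (g := fun c => pr p Z c) fun c _ => ?_).trans (sum_pr hp Z).le
      simp only [← Finset.sum_div, ← Finset.sum_mul, ← Finset.mul_sum, sum_pr_pair]
      by_cases hc : pr p Z c = 0
      · simp [hc]
      · rw [mul_div_cancel_right₀ _ hc])
  have e : ∑ ω, p ω * Real.logb q (pr p (fun ω => (X ω, Z ω)) (X ω, Z ω) *
      pr p (fun ω => (Y ω, Z ω)) (Y ω, Z ω) / pr p Z (Z ω)) =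
      ∑ ω, p ω * Real.logb q (pr p (fun ω => (X ω, Z ω)) (X ω, Z ω)) +
      ∑ ω, p ω * Real.logb q (pr p (fun ω => (Y ω, Z ω)) (Y ω, Z ω)) -
      ∑ ω, p ω * Real.logb q (pr p Z (Z ω)) := by
    rw [← Finset.sum_add_distrib, ← Finset.sum_sub_distrib]
    refine Finset.sum_congr rfl fun ω _ => ?_
    by_cases h0 : p ω = 0
    · simp [h0]
    · have h1 := pr_pos hp (fun ω => (X ω, Z ω)) h0
      have h2 := pr_pos hp (fun ω => (Y ω, Z ω)) h0
      have h3 := pr_pos hp Z h0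
      rw [Real.logb_div (mul_pos h1 h2).ne' h3.ne', Real.logb_mul h1.ne' h2.ne']
      ring
  simp only [e] at h
  rw [ent_eq Z, ent_eq (fun ω => (X ω, Z ω)), ent_eq (fun ω => (Y ω, Z ω))]
  linarith

lemma ent_pair_le (hq : 1 < (q : ℝ)) (hp : IsPMF p) (X : Ω → α) (Y : Ω → β) :
    ent q p (fun ω => (X ω, Y ω)) ≤ ent q p X + ent q p Y := by
  have h := ent_submod hq hp X Y (fun _ => ())
  have h0 : ent q p (fun _ : Ω => ()) = 0 := by simp [ent_eq, pr, hp.2]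
  have h1 := ent_mono hq hp (X := fun ω => (X ω, Y ω)) (Y := fun ω => (X ω, Y ω, ()))
    (fun ω ω' _ _ e => by simpa using e)
  have h2 := ent_mono hq hp (X := fun ω => (X ω, ())) (Y := X) (fun ω ω' _ _ e => by simpa using e)
  have h3 := ent_mono hq hp (X := fun ω => (Y ω, ())) (Y := Y) (fun ω ω' _ _ e => by simpa using e)
  linarith

lemma AddEnt.symm (hq : 1 < (q : ℝ)) (hp : IsPMF p) {X : Ω → α} {Y : Ω → β}
    (h : AddEnt q p X Y) : AddEnt q p Y X := by
  have h1 := ent_mono hq hp (X := fun ω => (X ω, Y ω)) (Y := fun ω => (Y ω, X ω))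
    (fun ω ω' _ _ e => by simp_all)
  unfold AddEnt at *
  linarith

/-- Data processing on one side: `I(X'; Y) ≤ I(X; Y)` for `X'` a function of `X`. -/
lemma AddEnt.left (hq : 1 < (q : ℝ)) (hp : IsPMF p) {X : Ω → α} {Y : Ω → β} {X' : Ω → α'}
    (h : AddEnt q p X Y) (hX : Determines p X X') : AddEnt q p X' Y := by
  have h1 := ent_submod hq hp X Y X'
  have h2 := ent_mono hq hp (X := fun ω => (X ω, Y ω)) (Y := fun ω => (X ω, Y ω, X' ω))
    (fun ω ω' _ _ e => by simp_all)
  have h3 := ent_mono hq hp (X := fun ω => (X ω, X' ω)) (Y := X)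
    (fun ω ω' a b e => by simp [e, hX ω ω' a b e])
  have h4 := ent_mono hq hp (X := fun ω => (Y ω, X' ω)) (Y := fun ω => (X' ω, Y ω))
    (fun ω ω' _ _ e => by simp_all)
  unfold AddEnt at *
  linarith

lemma AddEnt.mono (hq : 1 < (q : ℝ)) (hp : IsPMF p) {X : Ω → α} {Y : Ω → β}
    {X' : Ω → α'} {Y' : Ω → β'} (h : AddEnt q p X Y)
    (hX : Determines p X X') (hY : Determines p Y Y') : AddEnt q p X' Y' :=
  (((h.left hq hp hX).symm hq hp).left hq hp hY).symm hq hp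

lemma addEnt_of_indepRV (hp : IsPMF p) {X : Ω → α} {Y : Ω → β}
    (h : IndepRV p X Y) : AddEnt q p X Y := by
  rw [AddEnt, ent_eq, ent_eq, ent_eq, ← neg_add, neg_le_neg_iff, ← Finset.sum_add_distrib]
  refine Finset.sum_le_sum fun ω _ => ?_
  by_cases h0 : p ω = 0
  · simp [h0]
  · rw [h, Real.logb_mul (pr_pos hp X h0).ne' (pr_pos hp Y h0).ne', mul_add]

lemma addEnt_of_mutInfo {X : Ω → α} {Y : Ω → β} (h : mutInfo q p X Y = 0) :
    AddEnt q p X Y := by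
  unfold mutInfo at h
  unfold AddEnt
  linarith

end Entropy

/-! ### The two-user impossibility -/

/-- paper's Lemma in Section VII, impossibility for `B = K = 2`:
with per-link decompositions, per-link recoverability, relay security at both relays and
server security, it cannot hold that both `H(Z_1) ≤ L/2` and `H(Z_2) ≤ L/2`; consequently
the rate tuple `(R_X, R_Y, R_Z, R_{Z_Σ}) = (1, 1, 1/2, 1)` is not achievable. -/
theorem hsa_two_user_impossibility
    {L : ℕ} (hL : 1 ≤ L)
    {F : Type} [Field F] [Fintype F] [DecidableEq F]
    {Ω : Type} [Fintype Ω] (p : Ω → ℝ) (hp : IsPMF p)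
    {ζ χ υ δ ε : Type} [Fintype ζ] [DecidableEq ζ] [Fintype χ] [DecidableEq χ]
    [Fintype υ] [DecidableEq υ] [Fintype δ] [DecidableEq δ] [Fintype ε] [DecidableEq ε]
    (W : Fin 2 → Ω → (Fin L → F)) (Z : Fin 2 → Ω → ζ)
    (Xm : Fin 2 → Fin 2 → Ω → χ) (Y : Fin 2 → Ω → υ)
    (Wl : Fin 2 → Fin 2 → Ω → δ) (Zl : Fin 2 → Fin 2 → Ω → ε)
    -- the inputs W_1, W_2 are i.i.d. uniform on 𝔽_q^L
    (hW : ∀ w : Fin 2 → Fin L → F,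
      pr p (fun ω => fun k => W k ω) w = 1 / (Fintype.card F : ℝ) ^ (2 * L))
    -- the inputs are independent of the keys
    (hWZ : IndepRV p (fun ω => fun k => W k ω) (fun ω => fun k => Z k ω))
    -- user messages are functions of the user's input and key
    (hX : ∀ k : Fin 2,
      condEnt (Fintype.card F) p (fun ω => (Xm k 0 ω, Xm k 1 ω))
        (fun ω => (W k ω, Z k ω)) = 0)
    -- relay messages are functions of the received messages
    (hY : ∀ i : Fin 2,
      condEnt (Fintype.card F) p (Y i) (fun ω => (Xm 0 i ω, Xm 1 i ω)) = 0)
    -- the server recovers the sum of the inputs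
    (hRec : condEnt (Fintype.card F) p
      (fun ω => W 0 ω + W 1 ω) (fun ω => (Y 0 ω, Y 1 ω)) = 0)
    -- per-link decompositions: W_{k,i} and Z_{k,i}
    (hWl : ∀ k : Fin 2,
      condEnt (Fintype.card F) p (fun ω => (Wl k 0 ω, Wl k 1 ω)) (W k) = 0)
    (hZl : ∀ k : Fin 2,
      condEnt (Fintype.card F) p (fun ω => (Zl k 0 ω, Zl k 1 ω)) (Z k) = 0)
    (hXl : ∀ k i : Fin 2,
      condEnt (Fintype.card F) p (Xm k i) (fun ω => (Wl k i ω, Zl k i ω)) = 0)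
    -- per-link recoverability
    (hWrec : ∀ k i : Fin 2,
      condEnt (Fintype.card F) p (Wl k i) (fun ω => (Xm k i ω, Zl k i ω)) = 0)
    -- relay security at both relays
    (hRelaySec : ∀ i : Fin 2,
      mutInfo (Fintype.card F) p (fun ω => (Xm 0 i ω, Xm 1 i ω))
        (fun ω => (W 0 ω, W 1 ω)) = 0)
    -- server security
    (hServerSec : condMutInfo (Fintype.card F) p (fun ω => (Y 0 ω, Y 1 ω))
      (fun ω => (W 0 ω, W 1 ω)) (fun ω => W 0 ω + W 1 ω) = 0) :
    ¬ (ent (Fintype.card F) p (Z 0) ≤ (L : ℝ) / 2 ∧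
        ent (Fintype.card F) p (Z 1) ≤ (L : ℝ) / 2) := by
  rintro ⟨hZ0, hZ1⟩
  set q := Fintype.card F with hqdef
  have hq : 1 < (q : ℝ) := by exact_mod_cast Fintype.one_lt_card (α := F)
  have hLpos : (1 : ℝ) ≤ L := by exact_mod_cast hL
  have hZ : ∀ k, ent q p (Z k) ≤ (L : ℝ) / 2 := by
    intro k; fin_cases k <;> assumption
  -- Functional dependences on the support.
  have dX := fun k => determines_of_condEnt hq hp (hX k)
  have dY := fun i => determines_of_condEnt hq hp (hY i)
  have dRec := determines_of_condEnt hq hp hRec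
  have dWl := fun k => determines_of_condEnt hq hp (hWl k)
  have dZl := fun k => determines_of_condEnt hq hp (hZl k)
  have dXl := fun k i => determines_of_condEnt hq hp (hXl k i)
  have dWrec := fun k i => determines_of_condEnt hq hp (hWrec k i)
  have dWl' : ∀ k i, Determines p (W k) (Wl k i) := by
    intro k i ω ω' a b e
    have := dWl k ω ω' a b e
    fin_cases i <;> simp_all
  have dZl' : ∀ k i, Determines p (Z k) (Zl k i) := by
    intro k i ω ω' a b e
    have := dZl k ω ω' a b e
    fin_cases i <;> simp_all
  have dXm : ∀ k i, Determines p (fun ω => (W k ω, Z k ω)) (Xm k i) := by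
    intro k i ω ω' a b e
    have := dX k ω ω' a b e
    fin_cases i <;> simp_all
  have dW : ∀ k i, Determines p (fun ω => (Xm k i ω, Z k ω)) (Wl k i) := by
    intro k i ω ω' a b e
    have h1 := (Prod.mk.inj e).1
    have h2 := dZl' k i ω ω' a b (Prod.mk.inj e).2
    exact dWrec k i ω ω' a b (Prod.ext h1 h2)
  have dXl' : ∀ k i, Determines p (fun ω => (Wl k i ω, Z k ω)) (Xm k i) := by
    intro k i ω ω' a b e
    have h1 := (Prod.mk.inj e).1
    have h2 := dZl' k i ω ω' a b (Prod.mk.inj e).2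
    exact dXl k i ω ω' a b (Prod.ext h1 h2)
  have dSum : Determines p (fun ω => fun k i => Xm k i ω) (fun ω => W 0 ω + W 1 ω) := by
    intro ω ω' a b e
    have hx : ∀ k i, Xm k i ω = Xm k i ω' := fun k i => congrFun (congrFun e k) i
    have hy : ∀ i, Y i ω = Y i ω' := fun i => dY i ω ω' a b (by simp [hx])
    exact dRec ω ω' a b (by simp [hy])
  -- Entropies of the inputs.
  have hWW : ent q p (fun ω => fun k => W k ω) = 2 * L := by
    have h1 : ∀ ω, pr p (fun ω => fun k => W k ω) (fun k => W k ω) = ((q : ℝ) ^ (2 * L))⁻¹ :=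
      fun ω => by rw [hW, one_div]
    rw [ent_eq]
    simp only [h1]
    rw [← Finset.sum_mul, hp.2, Real.logb_inv, Real.logb_pow, Real.logb_self_eq_one hq]
    push_cast
    ring
  have hW1 : ∀ k, ent q p (W k) ≤ L := fun k =>
    ent_le_card hq hp (W k) L (by simp [hqdef])
  have indWZ := addEnt_of_indepRV (q := q) hp hWZ
  have indWW : AddEnt q p (W 0) (W 1) := by
    have h1 := ent_mono hq hp (X := fun ω => fun k => W k ω) (Y := fun ω => (W 0 ω, W 1 ω))
      (fun ω ω' _ _ e => by
        funext k
        have := Prod.mk.inj e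
        fin_cases k
        exacts [this.1, this.2])
    have := hW1 0
    have := hW1 1
    unfold AddEnt
    linarith
  have hW2 : ∀ k, (L : ℝ) ≤ ent q p (W k) := by
    have h1 := ent_mono hq hp (X := fun ω => fun k => W k ω) (Y := fun ω => (W 0 ω, W 1 ω))
      (fun ω ω' _ _ e => by
        funext k
        have := Prod.mk.inj e
        fin_cases k
        exacts [this.1, this.2])
    have h2 := ent_pair_le hq hp (W 0) (W 1)
    have h3 := hW1 0
    have h4 := hW1 1
    intro k
    fin_cases k <;> simp only [Fin.zero_eta, Fin.mk_one] <;> linarith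
  have dZ : ∀ k, Determines p (fun ω => fun k => Z k ω) (Z k) :=
    fun k ω ω' _ _ e => congrFun e k
  -- The shares of each input determine it, hence have total entropy at least `L`.
  have shares : ∀ k j : Fin 2, k ≠ j →
      (L : ℝ) ≤ ent q p (Wl k 0) + ent q p (Wl k 1) := by
    intro k j hkj
    have h1 := ent_mono hq hp (X := fun ω => ((fun k => W k ω), (fun k => Z k ω)))
      (Y := fun ω => ((Wl k 0 ω, Wl k 1 ω), W j ω, (fun k => Z k ω))) (by
        intro ω ω' a b e
        simp only [Prod.mk.injEq] at e
        obtain ⟨⟨e0, e1⟩, eW, eZ⟩ := e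
        have hz : ∀ k, Z k ω = Z k ω' := fun k => congrFun eZ k
        have hxk : ∀ i, Xm k i ω = Xm k i ω' := by
          intro i
          refine dXl' k i ω ω' a b ?_
          fin_cases i <;> simp [e0, e1, hz]
        have hxj : ∀ i, Xm j i ω = Xm j i ω' := fun i => dXm j i ω ω' a b (by simp [eW, hz])
        have hs := dSum ω ω' a b (by
          funext l i
          have : l = k ∨ l = j := by omega
          rcases this with rfl | rfl
          exacts [hxk i, hxj i])
        have hw : ∀ l, W l ω = W l ω' := by
          intro l
          fin_cases j <;> fin_cases k <;> fin_cases l <;> simp_all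
        simp [hw, hz])
    have h2 := ent_pair_le hq hp (fun ω => (Wl k 0 ω, Wl k 1 ω))
      (fun ω => (W j ω, (fun k => Z k ω)))
    have h3 := ent_pair_le hq hp (W j) (fun ω => (fun k => Z k ω))
    have h4 := ent_pair_le hq hp (Wl k 0) (Wl k 1)
    have h5 := hW1 j
    unfold AddEnt at indWZ
    linarith
  have relay := fun i => addEnt_of_mutInfo (hRelaySec i)
  have dRel : ∀ k i, Determines p (fun ω => (Xm 0 i ω, Xm 1 i ω)) (Xm k i) := by
    intro k i ω ω' _ _ e
    have := Prod.mk.inj e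
    fin_cases k
    exacts [this.1, this.2]
  have dWk : ∀ k, Determines p (fun ω => (W 0 ω, W 1 ω)) (W k) := by
    intro k ω ω' _ _ e
    have := Prod.mk.inj e
    fin_cases k
    exacts [this.1, this.2]
  have indXW : ∀ k i, AddEnt q p (Xm k i) (W k) := fun k i =>
    (relay i).mono hq hp (dRel k i) (dWk k)
  -- One-time-pad bound: an independent ciphertext needs a key as long as the share.
  have shareLe : ∀ k i, ent q p (Wl k i) ≤ (L : ℝ) / 2 := by
    intro k i
    have h1 : AddEnt q p (Xm k i) (Wl k i) :=
      (indXW k i).mono hq hp (fun _ _ _ _ e => e) (dWl' k i)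
    have h2 := ent_mono hq hp (X := fun ω => (Xm k i ω, Wl k i ω))
      (Y := fun ω => (Xm k i ω, Z k ω))
      (fun ω ω' a b e => Prod.ext (Prod.mk.inj e).1 (dW k i ω ω' a b e))
    have h3 := ent_pair_le hq hp (Xm k i) (Z k)
    have h4 := hZ k
    unfold AddEnt at h1
    linarith
  have shareGe : ∀ k i, (L : ℝ) / 2 ≤ ent q p (Wl k i) := by
    intro k i
    have h1 : (L : ℝ) ≤ ent q p (Wl k 0) + ent q p (Wl k 1) := by
      fin_cases k
      exacts [shares 0 1 (by decide), shares 1 0 (by decide)]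
    have h2 := shareLe k 0
    have h3 := shareLe k 1
    fin_cases i <;> simp only [Fin.zero_eta, Fin.mk_one] <;> linarith
  have msgLe : ∀ k i, ent q p (Xm k i) ≤ (L : ℝ) / 2 := by
    intro k i
    have h1 := indXW k i
    have h2 := ent_mono hq hp (X := fun ω => (Xm k i ω, W k ω)) (Y := fun ω => (W k ω, Z k ω))
      (fun ω ω' a b e => Prod.ext (dXm k i ω ω' a b e) (Prod.mk.inj e).1)
    have h3 := ent_pair_le hq hp (W k) (Z k)
    have h4 := hZ k
    unfold AddEnt at h1
    linarith
  have dWpi : ∀ k, Determines p (fun ω => fun k => W k ω) (W k) :=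
    fun k ω ω' _ _ e => congrFun e k
  have msgGe : (L : ℝ) / 2 ≤ ent q p (Xm 0 0) := by
    have h1 : AddEnt q p (Wl 0 0) (Z 0) := indWZ.mono hq hp
      (fun ω ω' a b e => dWl' 0 0 ω ω' a b (dWpi 0 ω ω' a b e)) (dZ 0)
    have h2 := ent_mono hq hp (X := fun ω => (Wl 0 0 ω, Z 0 ω))
      (Y := fun ω => (Xm 0 0 ω, Z 0 ω))
      (fun ω ω' a b e => Prod.ext (dW 0 0 ω ω' a b e) (Prod.mk.inj e).2)
    have h3 := ent_pair_le hq hp (Xm 0 0) (Z 0)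
    have h4 := shareGe 0 0
    unfold AddEnt at h1
    linarith
  -- Relay 0 receives two messages hidden by the keys alone, which needs joint key entropy `L`.
  have keys : (L : ℝ) ≤ ent q p (fun ω => fun k => Z k ω) := by
    have h1 := relay 0
    have h2 := ent_mono hq hp (X := fun ω => ((Xm 0 0 ω, Xm 1 0 ω), (W 0 ω, W 1 ω)))
      (Y := fun ω => ((W 0 ω, W 1 ω), (fun k => Z k ω))) (by
        intro ω ω' a b e
        simp only [Prod.mk.injEq] at e
        obtain ⟨⟨e0, e1⟩, eZ⟩ := e
        have hz : ∀ k, Z k ω = Z k ω' := fun k => congrFun eZ k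
        have h0 := dXm 0 0 ω ω' a b (by simp [e0, hz])
        have h1 := dXm 1 0 ω ω' a b (by simp [e1, hz])
        simp [h0, h1, e0, e1])
    have h3 := ent_pair_le hq hp (fun ω => (W 0 ω, W 1 ω)) (fun ω => (fun k => Z k ω))
    have h4 : AddEnt q p (fun ω => (Wl 0 0 ω, Wl 1 0 ω)) (fun ω => fun k => Z k ω) :=
      indWZ.mono hq hp (fun ω ω' a b e => Prod.ext
        (dWl' 0 0 ω ω' a b (congrFun e 0)) (dWl' 1 0 ω ω' a b (congrFun e 1)))
        (fun _ _ _ _ e => e)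
    have h5 := ent_mono hq hp (X := fun ω => ((Wl 0 0 ω, Wl 1 0 ω), (fun k => Z k ω)))
      (Y := fun ω => ((Xm 0 0 ω, Xm 1 0 ω), (fun k => Z k ω))) (by
        intro ω ω' a b e
        simp only [Prod.mk.injEq] at e
        obtain ⟨⟨e0, e1⟩, eZ⟩ := e
        have hz : ∀ k, Z k ω = Z k ω' := fun k => congrFun eZ k
        have h0 := dW 0 0 ω ω' a b (by simp [e0, hz])
        have h1 := dW 1 0 ω ω' a b (by simp [e1, hz])
        simp [h0, h1, eZ])
    have h6 := ent_pair_le hq hp (fun ω => (Xm 0 0 ω, Xm 1 0 ω)) (fun ω => (fun k => Z k ω))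
    have h7 : AddEnt q p (Wl 0 0) (Wl 1 0) := indWW.mono hq hp (dWl' 0 0) (dWl' 1 0)
    have h8 := shareGe 0 0
    have h9 := shareGe 1 0
    unfold AddEnt at h1 h4 h7
    linarith
  -- The key entropies are now tight, so the two users are independent.
  have indUsers : AddEnt q p (fun ω => (W 0 ω, Z 0 ω)) (fun ω => (W 1 ω, Z 1 ω)) := by
    have h1 := ent_mono hq hp (X := fun ω => ((fun k => W k ω), (fun k => Z k ω)))
      (Y := fun ω => ((W 0 ω, Z 0 ω), (W 1 ω, Z 1 ω))) (by
        intro ω ω' a b e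
        simp only [Prod.mk.injEq] at e
        obtain ⟨⟨e0, e1⟩, e2, e3⟩ := e
        refine Prod.ext (funext fun k => ?_) (funext fun k => ?_) <;> fin_cases k <;> assumption)
    have h2 := ent_pair_le hq hp (W 0) (Z 0)
    have h3 := ent_pair_le hq hp (W 1) (Z 1)
    have h4 := hW1 0
    have h5 := hW1 1
    unfold AddEnt at indWZ ⊢
    linarith
  -- The messages of user 0 and the data of user 1 determine `W_0`: too much for entropy `L`.
  have h1 := ent_mono hq hp (X := fun ω => ((Xm 0 0 ω, W 0 ω), (W 1 ω, Z 1 ω)))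
    (Y := fun ω => ((Xm 0 0 ω, Xm 0 1 ω), (W 1 ω, Z 1 ω))) (by
      intro ω ω' a b e
      simp only [Prod.mk.injEq] at e
      obtain ⟨⟨e0, e1⟩, e2, e3⟩ := e
      have hx1 : ∀ i, Xm 1 i ω = Xm 1 i ω' := fun i => dXm 1 i ω ω' a b (by simp [e2, e3])
      have hs := dSum ω ω' a b (by
        funext l i
        fin_cases l
        · fin_cases i <;> assumption
        · exact hx1 i)
      simp_all)
  have h2 := ent_pair_le hq hp (fun ω => (Xm 0 0 ω, Xm 0 1 ω)) (fun ω => (W 1 ω, Z 1 ω))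
  have h3 := ent_pair_le hq hp (Xm 0 0) (Xm 0 1)
  have h4 := msgLe 0 0
  have h5 := msgLe 0 1
  have h6 : AddEnt q p (fun ω => (Xm 0 0 ω, W 0 ω)) (fun ω => (W 1 ω, Z 1 ω)) :=
    indUsers.mono hq hp
      (fun ω ω' a b e => Prod.ext (dXm 0 0 ω ω' a b e) (Prod.mk.inj e).1) (fun _ _ _ _ e => e)
  have h7 := indXW 0 0
  have h8 := hW2 0
  unfold AddEnt at h6 h7
  linarith
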